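/- Let n ≥ 4 and let A be a 5×n real matrix such that every 4×4 submatrix of A is tropically singular (i.e., A has tropical rank at most 3). Then there exists a lift Ã of A over K with rank(Ã) ≤ 3 (i.e., A has Kapranov rank at most 3). Equivalently, the 4×4 minors of a 5×n matrix of variables form a tropical basis. -/

import Mathlib

noncomputable section

/-- The field of generalized power series over `ℂ` with real exponents and
well-ordered support. -/
abbrev K : Type := HahnSeries ℝ ℂ

/-- An `m × m` real matrix is tropically singular if the minimum over all permutations `σ`
of `∑ i, M i (σ i)` is attained by at least two distinct permutations. -/
def TropSingular {m : ℕ} (M : Matrix (Fin m) (Fin m) ℝ) : Prop :=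
  ∃ σ τ : Equiv.Perm (Fin m), σ ≠ τ ∧
    (∑ i, M i (σ i)) = (∑ i, M i (τ i)) ∧
    ∀ ρ : Equiv.Perm (Fin m), (∑ i, M i (σ i)) ≤ ∑ i, M i (ρ i)

/-- `B` is a lift of the real matrix `A` over `K`: every entry of `B` is nonzero and its
valuation (order, the smallest exponent of the support) equals the corresponding entry of `A`. -/
def IsLift {d n : ℕ} (A : Matrix (Fin d) (Fin n) ℝ) (B : Matrix (Fin d) (Fin n) K) : Prop :=
  ∀ i j, B i j ≠ 0 ∧ (B i j).order = A i j

set_option linter.unusedVariables false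
def T4 (p q r s : ℝ) : Prop :=
  (q ≤ p ∨ r ≤ p ∨ s ≤ p) ∧ (p ≤ q ∨ r ≤ q ∨ s ≤ q) ∧
  (p ≤ r ∨ q ≤ r ∨ s ≤ r) ∧ (p ≤ s ∨ q ≤ s ∨ r ≤ s)

theorem pb_row1 (w1 w2 w3 w4 w5 s a1 a5 m : ℝ) (hs : 0 ≤ s) (h01 : 0 ≤ m) (h1m : m ≤ a1) (h5m : m ≤ a5)
    (h1 : T4 w2 w3 w4 w5) (h2 : T4 w1 (w3+s) w4 w5) (h3 : T4 w1 (w2+s) w4 w5)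
    (h4 : T4 (w1+a1) w2 w3 (w5+a5)) : T4 w2 w3 (w4+m) (w5+m) := by
  obtain ⟨p1,p2,p3,p4⟩ := h1
  obtain ⟨q1,q2,q3,q4⟩ := h2
  obtain ⟨r1,r2,r3,r4⟩ := h3
  obtain ⟨t1,t2,t3,t4⟩ := h4
  refine ⟨?_,?_,?_,?_⟩ <;> by_contra! h <;> obtain ⟨u1,u2,u3⟩ := h
  · clear p1 p2 p3 p4 r1 r2 r3 r4 t1 t3 t4 q2 q3 q4
    grind
  · clear p1 p2 p3 p4 q1 q2 q3 q4 t1 t2 t4 r2 r3 r4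
    grind
  · clear q1 q2 q3 q4 r1 r2 r3 r4 t1 t2 t3 t4
    grind
  · clear q1 q2 q3 q4 r1 r2 r3 r4 t1 t2 t3 t4
    grind
theorem pb_row4 (w1 w2 w3 w4 w5 s a1 a5 m : ℝ) (hs : 0 ≤ s) (h01 : 0 ≤ m) (h1m : m ≤ a1) (h5m : m ≤ a5) (hm : m = a1 ∨ m = a5)
    (h1 : T4 w2 w3 w4 w5) (h2 : T4 w1 (w3+s) w4 w5) (h3 : T4 w1 (w2+s) w4 w5)
    (h4 : T4 (w1+a1) w2 w3 (w5+a5)) : T4 (w1+m) w2 w3 (w5+a5) := by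
  obtain ⟨p1,p2,p3,p4⟩ := h1
  obtain ⟨q1,q2,q3,q4⟩ := h2
  obtain ⟨r1,r2,r3,r4⟩ := h3
  obtain ⟨t1,t2,t3,t4⟩ := h4
  refine ⟨?_,?_,?_,?_⟩ <;> by_contra! h <;> obtain ⟨u1,u2,u3⟩ := h
  · clear r1 r2 r3 r4 t2 t3 t4 q2 q3 q4 p1 p2 p4
    grind
  · clear p1 p2 p3 p4 q1 q2 q3 q4 r1 r2 r3 r4
    grind
  · clear p1 p2 p3 p4 q1 q2 q3 q4 r1 r2 r3 r4
    grind
  · clear p1 p2 p3 p4 q1 q2 q3 q4 r1 r2 r3 r4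
    grind
theorem pb_row5 (w1 w2 w3 w4 w5 s a1 a5 m : ℝ) (hs : 0 ≤ s) (h01 : 0 ≤ m) (h1m : m ≤ a1) (h5m : m ≤ a5) (hm : m = a1 ∨ m = a5)
    (h1 : T4 w2 w3 w4 w5) (h2 : T4 w1 (w3+s) w4 w5) (h3 : T4 w1 (w2+s) w4 w5)
    (h4 : T4 (w1+a1) w2 w3 (w5+a5)) : T4 (w1+m) w2 w3 (w4+a5) := by
  obtain ⟨p1,p2,p3,p4⟩ := h1
  obtain ⟨q1,q2,q3,q4⟩ := h2
  obtain ⟨r1,r2,r3,r4⟩ := h3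
  obtain ⟨t1,t2,t3,t4⟩ := h4
  refine ⟨?_,?_,?_,?_⟩ <;> by_contra! h <;> obtain ⟨u1,u2,u3⟩ := h
  · clear r1 r2 r3 r4 t2 t3 t4 q2 q3 q4 p1 p2 p3
    grind
  · clear p1 p2 p3 q1 q2 q3 r1 r2 r3 r4 t1 t3 t4
    grind
  · clear p1 p2 p3 q1 q2 q3 q4 r1 r2 r3 t1 t2 t4
    grind
  · clear p1 p2 p4 q1 q2 q3 q4 r1 r2 r3 r4 t1 t2 t3
    grind
theorem pw_row3 (w1 w2 w3 w4 w5 s1 s2 : ℝ) (hs1 : 0 ≤ s1) (hs2 : 0 ≤ s2)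
    (h1 : T4 w2 (w3 + s1) w4 w5) (h2 : T4 w1 w3 w4 (w5 + s2))
    (n34 : s1 = 0 → ¬ (w3 = w4 ∧ w3 < w1 ∧ w3 < w2 ∧ w3 < w5))
    (n35 : s1 = 0 → s2 = 0 → ¬ (w3 = w5 ∧ w3 < w1 ∧ w3 < w2 ∧ w3 < w4)) :
    T4 (w1 + s1) w4 w2 w5 := by
  obtain ⟨p1,p2,p3,p4⟩ := h1
  obtain ⟨q1,q2,q3,q4⟩ := h2
  refine ⟨?_,?_,?_,?_⟩ <;> by_contra! h <;> obtain ⟨u1,u2,u3⟩ := h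
  · clear n34 n35 p1 p3 p4 q2 q3 q4
    grind
  · clear n35 p1 p2 p4 q4 q3 q1
    grind
  · clear n34 n35 p2 p3 p4 q1 q3 q4
    grind
  · clear n34 p1 p3 q1 q3
    grind

theorem pw_row4 (w1 w2 w3 w4 w5 s1 s2 : ℝ) (hs1 : 0 ≤ s1) (hs2 : 0 ≤ s2)
    (h1 : T4 w2 (w3 + s1) w4 w5) (h2 : T4 w1 w3 w4 (w5 + s2))
    (n34 : s1 = 0 → ¬ (w3 = w4 ∧ w3 < w1 ∧ w3 < w2 ∧ w3 < w5))
    (n45 : s2 = 0 → ¬ (w4 = w5 ∧ w4 < w1 ∧ w4 < w2 ∧ w4 < w3)) :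
    T4 w1 w3 w2 w5 := by
  obtain ⟨p1,p2,p3,p4⟩ := h1
  obtain ⟨q1,q2,q3,q4⟩ := h2
  refine ⟨?_,?_,?_,?_⟩ <;> by_contra! h <;> obtain ⟨u1,u2,u3⟩ := h
  · clear n34 n45 p1 p2 p4 q2 q3 q4
    grind
  · clear n45 p1 p2 p4 q1 q4
    grind
  · clear n34 n45 p2 p4 p3 q1 q2 q4
    grind
  · clear n34 p1 p2 q1 q2 q4
    grind

theorem pw_row5 (w1 w2 w3 w4 w5 s1 s2 : ℝ) (hs1 : 0 ≤ s1) (hs2 : 0 ≤ s2)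
    (h1 : T4 w2 (w3 + s1) w4 w5) (h2 : T4 w1 w3 w4 (w5 + s2))
    (n45 : s2 = 0 → ¬ (w4 = w5 ∧ w4 < w1 ∧ w4 < w2 ∧ w4 < w3))
    (n35 : s1 = 0 → s2 = 0 → ¬ (w3 = w5 ∧ w3 < w1 ∧ w3 < w2 ∧ w3 < w4)) :
    T4 w1 w3 w4 (w2 + s2) := by
  obtain ⟨p1,p2,p3,p4⟩ := h1
  obtain ⟨q1,q2,q3,q4⟩ := h2
  refine ⟨?_,?_,?_,?_⟩ <;> by_contra! h <;> obtain ⟨u1,u2,u3⟩ := h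
  · clear n35 n45 p1 p2 p3 q2 q3 q4
    grind
  · clear n45 p1 p3 q1 q3
    grind
  · clear n35 p1 p2 q1 q2
    grind
  · clear n35 n45 p2 p4 p3 q1 q2 q3
    grind

theorem pe (w1 w2 w3 w4 w5 r4 r5 : ℝ) (hs1 : 0 ≤ r4) (hs2 : 0 ≤ r5)
    (h1 : T4 w2 w3 (w4+r4) (w5+r5)) (h2 : T4 w1 w3 w4 w5)
    (n4 : r4 = 0 → ¬ (w3 = w4 ∧ w3 < w1 ∧ w3 < w2 ∧ w3 < w5))
    (n5 : r5 = 0 → ¬ (w3 = w5 ∧ w3 < w1 ∧ w3 < w2 ∧ w3 < w4)) :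
    T4 w1 w2 w4 w5 := by
  obtain ⟨p1,p2,p3,p4⟩ := h1
  obtain ⟨q1,q2,q3,q4⟩ := h2
  refine ⟨?_,?_,?_,?_⟩ <;> by_contra! h <;> obtain ⟨u1,u2,u3⟩ := h
  · clear n4 n5 p1 p3 p4 q2 q3 q4
    grind
  · clear n4 n5 p2 p3 p4 q1 q3 q4
    grind
  · clear n5 p1 p4 p3 q1 q2 q4
    grind
  · clear n4 p1 p3 p4 q1 q2 q3
    grind

/-- Every column satisfies the four-term condition with the given weights. -/
def Y (X : Set (Fin 5 → ℝ)) (b c d e : Fin 5) (vb vc vd ve : ℝ) : Prop :=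
  ∀ x ∈ X, T4 (x b + vb) (x c + vc) (x d + vd) (x e + ve)

def NE (X : Set (Fin 5 → ℝ)) (k l a b c : Fin 5) (vk vl va vb vc vc' : ℝ) : Prop :=
  ∀ x ∈ X, ¬ (x k + vk = x l + vl ∧ x k + vk < x a + va ∧ x k + vk < x b + vb ∧
    x k + vk < x c + vc ∧ x k + vk < x c + vc')

def D5 (a b c d e : Fin 5) : Prop := [a, b, c, d, e].Nodup

def Line (X : Set (Fin 5 → ℝ)) : Prop :=
  ∃ a b c d e : Fin 5, ∃ la lb lc ld le s1 s2 : ℝ, D5 a b c d e ∧ 0 ≤ s1 ∧ 0 ≤ s2 ∧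
    Y X b c d e (lb + s1) lc ld le ∧ Y X a c d e (la + s1) lc ld le ∧
    Y X a b d e la lb ld le ∧ Y X a b c e la lb lc (le + s2) ∧ Y X a b c d la lb lc (ld + s2)

section
variable {X : Set (Fin 5 → ℝ)} {a b c d e k l : Fin 5}
  {va vb vc vd ve wa wb wc wd we vc' wk wl vk vl : ℝ}

theorem T4.s12 {p q r s : ℝ} (h : T4 p q r s) : T4 q p r s := by
  unfold T4 at *; tauto
theorem T4.s23 {p q r s : ℝ} (h : T4 p q r s) : T4 p r q s := by
  unfold T4 at *; tauto
theorem T4.s34 {p q r s : ℝ} (h : T4 p q r s) : T4 p q s r := by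
  unfold T4 at *; tauto
theorem T4.sh {p q r s : ℝ} (m : ℝ) (h : T4 p q r s) : T4 (p+m) (q+m) (r+m) (s+m) := by
  unfold T4 at *; simpa using h

theorem Y.s12 (h : Y X b c d e vb vc vd ve) : Y X c b d e vc vb vd ve := fun x hx => (h x hx).s12
theorem Y.s23 (h : Y X b c d e vb vc vd ve) : Y X b d c e vb vd vc ve := fun x hx => (h x hx).s23
theorem Y.s34 (h : Y X b c d e vb vc vd ve) : Y X b c e d vb vc ve vd := fun x hx => (h x hx).s34
theorem Y.sh (m : ℝ) (h : Y X b c d e vb vc vd ve) (hb : wb = vb + m) (hc : wc = vc + m)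
    (hd : wd = vd + m) (he : we = ve + m) : Y X b c d e wb wc wd we := fun x hx => by
  have := (h x hx).sh m
  rw [hb, hc, hd, he]; simpa only [add_assoc] using this
theorem Y.cg (h : Y X b c d e vb vc vd ve) (hb : wb = vb) (hc : wc = vc)
    (hd : wd = vd) (he : we = ve) : Y X b c d e wb wc wd we := by
  subst hb hc hd he; exact h

theorem NE.sym (h : NE X k l a b c vk vl va vb vc vc') : NE X l k a b c vl vk va vb vc vc' := by
  intro x hx
  have := h x hx
  grind

theorem NE.of_k (h : Y X l a b c wl wa wb wc) (ha : wl - vl ≤ wa - va) (hb : wl - vl ≤ wb - vb)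
    (hc : wl - vl ≤ wc - vc ∨ wl - vl ≤ wc - vc') : NE X k l a b c vk vl va vb vc vc' := by
  intro x hx ⟨e1, e2, e3, e4, e5⟩
  rcases (h x hx).1 with h | h | h
  · linarith
  · linarith
  · rcases hc with hc | hc <;> linarith

theorem NE.of_l (h : Y X k a b c wk wa wb wc) (ha : wk - vk ≤ wa - va) (hb : wk - vk ≤ wb - vb)
    (hc : wk - vk ≤ wc - vc ∨ wk - vk ≤ wc - vc') : NE X k l a b c vk vl va vb vc vc' :=
  (NE.of_k h ha hb hc).sym

end

/-- Elimination at index `i3`. -/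
theorem Elim {X : Set (Fin 5 → ℝ)} {i1 i2 i3 i4 i5 : Fin 5} {u2 u3 u4 u5 v1 v4 v5 : ℝ}
    (h1 : Y X i2 i3 i4 i5 u2 u3 u4 u5) (h2 : Y X i1 i3 i4 i5 v1 u3 v4 v5)
    (h4 : v4 ≤ u4) (h5 : v5 ≤ u5)
    (n4 : v4 = u4 → NE X i3 i4 i1 i2 i5 u3 u4 v1 u2 v5 v5)
    (n5 : v5 = u5 → NE X i3 i5 i1 i2 i4 u3 u5 v1 u2 v4 v4) :
    Y X i1 i2 i4 i5 v1 u2 v4 v5 := by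
  intro x hx
  refine pe (x i1 + v1) (x i2 + u2) (x i3 + u3) (x i4 + v4) (x i5 + v5) (u4 - v4) (u5 - v5)
    (by linarith) (by linarith) ?_ (h2 x hx) ?_ ?_
  · have := h1 x hx
    convert this using 1 <;> ring
  · intro e h
    have e' : v4 = u4 := by linarith
    have := n4 e' x hx
    subst e'
    exact this ⟨h.1, h.2.1, h.2.2.1, h.2.2.2, h.2.2.2⟩
  · intro e h
    have e' : v5 = u5 := by linarith
    have := n5 e' x hx
    subst e'
    exact this ⟨h.1, h.2.1, h.2.2.1, h.2.2.2, h.2.2.2⟩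

/-- Pair lemma, sorted differences. -/
theorem PairS {X : Set (Fin 5 → ℝ)} {i1 i2 i3 i4 i5 : Fin 5} {u2 u3 u4 u5 v1 v3 v4 v5 : ℝ}
    (hD : D5 i1 i2 i3 i4 i5)
    (h1 : Y X i2 i3 i4 i5 u2 u3 u4 u5) (h2 : Y X i1 i3 i4 i5 v1 v3 v4 v5)
    (h34 : u4 - v4 ≤ u3 - v3) (h45 : u5 - v5 ≤ u4 - v4)
    (n34 : u3 - v3 = u4 - v4 → NE X i3 i4 i1 i2 i5 u3 u4 (v1 + (u3 - v3)) u2 u5 (v5 + (u3 - v3)))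
    (n35 : u3 - v3 = u5 - v5 → NE X i3 i5 i1 i2 i4 u3 u5 (v1 + (u3 - v3)) u2 u4 (v4 + (u3 - v3)))
    (n45 : u4 - v4 = u5 - v5 → NE X i4 i5 i1 i2 i3 u4 u5 (v1 + (u4 - v4)) u2 u3 (v3 + (u4 - v4))) :
    Line X := by
  have key : ∀ x ∈ X, ∃ w1 w2 w3 w4 w5 s1 s2 : ℝ, w1 = x i1 + (v1 + (u4 - v4)) ∧
      w2 = x i2 + u2 ∧ w3 = x i3 + (v3 + (u4 - v4)) ∧ w4 = x i4 + u4 ∧ w5 = x i5 + u5 ∧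
      s1 = (u3 - v3) - (u4 - v4) ∧ s2 = (u4 - v4) - (u5 - v5) ∧ T4 w2 (w3 + s1) w4 w5 ∧
      T4 w1 w3 w4 (w5 + s2) ∧ (s1 = 0 → ¬ (w3 = w4 ∧ w3 < w1 ∧ w3 < w2 ∧ w3 < w5)) ∧
      (s2 = 0 → ¬ (w4 = w5 ∧ w4 < w1 ∧ w4 < w2 ∧ w4 < w3)) ∧
      (s1 = 0 → s2 = 0 → ¬ (w3 = w5 ∧ w3 < w1 ∧ w3 < w2 ∧ w3 < w4)) := by
    intro x hx
    refine ⟨_, _, _, _, _, _, _, rfl, rfl, rfl, rfl, rfl, rfl, rfl, ?_, ?_, ?_, ?_, ?_⟩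
    · have := h1 x hx
      convert this using 1; ring
    · have := (h2 x hx).sh (u4 - v4)
      convert this using 1 <;> ring
    · rintro e ⟨ha, hb, hc, hd⟩
      refine n34 (by linarith) x hx ⟨?_, ?_, ?_, ?_, ?_⟩ <;> linarith
    · rintro e ⟨ha, hb, hc, hd⟩
      refine n45 (by linarith) x hx ⟨?_, ?_, ?_, ?_, ?_⟩ <;> linarith
    · rintro e f ⟨ha, hb, hc, hd⟩
      refine n35 (by linarith) x hx ⟨?_, ?_, ?_, ?_, ?_⟩ <;> linarith
  refine ⟨i1, i3, i4, i2, i5, v1 + (u4 - v4), v3 + (u4 - v4), u4, u2, u5,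
    (u3 - v3) - (u4 - v4), (u4 - v4) - (u5 - v5), ?_, by linarith, by linarith, ?_, ?_, ?_, ?_, ?_⟩
  · unfold D5 at *; grind
  all_goals
    intro x hx
    obtain ⟨w1, w2, w3, w4, w5, s1, s2, e1, e2, e3, e4, e5, e6, e7, t1, t2, n1, n2, n3⟩ := key x hx
    have hs1 : 0 ≤ s1 := by linarith
    have hs2 : 0 ≤ s2 := by linarith
  · convert t1.s12.s23 using 1 <;> linarith
  · convert pw_row3 w1 w2 w3 w4 w5 s1 s2 hs1 hs2 t1 t2 n1 n3 using 1 <;> linarith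
  · convert pw_row4 w1 w2 w3 w4 w5 s1 s2 hs1 hs2 t1 t2 n1 n2 using 1 <;> linarith
  · convert t2 using 1 <;> linarith
  · convert pw_row5 w1 w2 w3 w4 w5 s1 s2 hs1 hs2 t1 t2 n2 n3 using 1 <;> linarith

theorem Pair {X : Set (Fin 5 → ℝ)} {i1 i2 i3 i4 i5 : Fin 5} {u2 u3 u4 u5 v1 v3 v4 v5 : ℝ}
    (hD : D5 i1 i2 i3 i4 i5)
    (h1 : Y X i2 i3 i4 i5 u2 u3 u4 u5) (h2 : Y X i1 i3 i4 i5 v1 v3 v4 v5)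
    (n34 : u3 - v3 = u4 - v4 → NE X i3 i4 i1 i2 i5 u3 u4 (v1 + (u3 - v3)) u2 u5 (v5 + (u3 - v3)))
    (n35 : u3 - v3 = u5 - v5 → NE X i3 i5 i1 i2 i4 u3 u5 (v1 + (u3 - v3)) u2 u4 (v4 + (u3 - v3)))
    (n45 : u4 - v4 = u5 - v5 → NE X i4 i5 i1 i2 i3 u4 u5 (v1 + (u4 - v4)) u2 u3 (v3 + (u4 - v4))) :
    Line X := by
  have m34 : u4 - v4 = u3 - v3 →
      NE X i4 i3 i1 i2 i5 u4 u3 (v1 + (u4 - v4)) u2 u5 (v5 + (u4 - v4)) := fun h => by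
    rw [h]; exact (n34 h.symm).sym
  have m35 : u5 - v5 = u3 - v3 →
      NE X i5 i3 i1 i2 i4 u5 u3 (v1 + (u5 - v5)) u2 u4 (v4 + (u5 - v5)) := fun h => by
    rw [h]; exact (n35 h.symm).sym
  have m45 : u5 - v5 = u4 - v4 →
      NE X i5 i4 i1 i2 i3 u5 u4 (v1 + (u5 - v5)) u2 u3 (v3 + (u5 - v5)) := fun h => by
    rw [h]; exact (n45 h.symm).sym
  unfold D5 at hD
  rcases le_total (u3 - v3) (u4 - v4) with a | a <;> rcases le_total (u3 - v3) (u5 - v5) with b | b <;>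
    rcases le_total (u4 - v4) (u5 - v5) with c | c
  · exact PairS (by unfold D5; grind) h1.s23.s34.s23 h2.s23.s34.s23 c a m45 m35 m34
  · exact PairS (by unfold D5; grind) h1.s23.s34 h2.s23.s34 c b n45 m34 m35
  · exact PairS (by unfold D5; grind) h1.s23.s34.s23 h2.s23.s34.s23 c a m45 m35 m34
  · exact PairS (by unfold D5; grind) h1.s23 h2.s23 a b m34 n45 n35
  · exact PairS (by unfold D5; grind) h1.s34.s23 h2.s34.s23 b a m35 m45 n34
  · exact PairS (by unfold D5; grind) h1 h2 a c n34 n35 n45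
  · exact PairS (by unfold D5; grind) h1.s34 h2.s34 b c n35 n34 m45
  · exact PairS (by unfold D5; grind) h1 h2 a c n34 n35 n45

theorem LemB {X : Set (Fin 5 → ℝ)} {i1 i2 i3 i4 i5 : Fin 5} {l1 l2 l3 l4 l5 s a1 a5 : ℝ}
    (hD : D5 i1 i2 i3 i4 i5) (hs : 0 ≤ s) (ha1 : 0 ≤ a1) (ha5 : 0 ≤ a5)
    (h1 : Y X i2 i3 i4 i5 l2 l3 l4 l5) (h2 : Y X i1 i3 i4 i5 l1 (l3 + s) l4 l5)
    (h3 : Y X i1 i2 i4 i5 l1 (l2 + s) l4 l5) (h4 : Y X i1 i2 i3 i5 (l1 + a1) l2 l3 (l5 + a5)) :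
    Line X := by
  obtain ⟨m, hm0, hm1, hm5, hm⟩ : ∃ m : ℝ, 0 ≤ m ∧ m ≤ a1 ∧ m ≤ a5 ∧ (m = a1 ∨ m = a5) := by
    rcases le_total a1 a5 with h | h
    · exact ⟨a1, ha1, le_rfl, h, .inl rfl⟩
    · exact ⟨a5, ha5, h, le_rfl, .inr rfl⟩
  have key : ∀ x ∈ X, ∃ w1 w2 w3 w4 w5 : ℝ, w1 = x i1 + l1 ∧
      w2 = x i2 + l2 ∧ w3 = x i3 + l3 ∧ w4 = x i4 + l4 ∧ w5 = x i5 + l5 ∧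
      T4 w2 w3 w4 w5 ∧ T4 w1 (w3+s) w4 w5 ∧ T4 w1 (w2+s) w4 w5 ∧ T4 (w1+a1) w2 w3 (w5+a5) := by
    intro x hx
    refine ⟨_, _, _, _, _, rfl, rfl, rfl, rfl, rfl, h1 x hx, ?_, ?_, ?_⟩
    · convert h2 x hx using 1; ring
    · convert h3 x hx using 1; ring
    · convert h4 x hx using 1 <;> ring
  refine ⟨i2, i3, i1, i4, i5, l2, l3, l1 + m, l4 + m, l5 + m, s + m, a5 - m, ?_,
    by linarith, by linarith, ?_, ?_, ?_, ?_, ?_⟩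
  · unfold D5 at *; grind
  all_goals
    intro x hx
    obtain ⟨w1, w2, w3, w4, w5, e1, e2, e3, e4, e5, t1, t2, t3, t4⟩ := key x hx
  · convert (t2.sh m).s12 using 1 <;> linarith
  · convert (t3.sh m).s12 using 1 <;> linarith
  · convert pb_row1 w1 w2 w3 w4 w5 s a1 a5 m hs hm0 hm1 hm5 t1 t2 t3 t4 using 1 <;> linarith
  · convert (pb_row4 w1 w2 w3 w4 w5 s a1 a5 m hs hm0 hm1 hm5 hm t1 t2 t3 t4).s12.s23 using 1 <;>
      linarith
  · convert (pb_row5 w1 w2 w3 w4 w5 s a1 a5 m hs hm0 hm1 hm5 hm t1 t2 t3 t4).s12.s23 using 1 <;>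
      linarith

theorem P1case {X : Set (Fin 5 → ℝ)} {i1 i2 i3 i4 i5 : Fin 5} {l1 l2 l3 l4 l5 s a1 a2 a3 a5 : ℝ}
    (hD : D5 i1 i2 i3 i4 i5) (hs : 0 ≤ s) (ha1 : 0 ≤ a1) (ha2 : a2 = 0) (ha3 : 0 < a3) (ha5 : 0 < a5)
    (h1 : Y X i2 i3 i4 i5 l2 l3 l4 l5) (h2 : Y X i1 i3 i4 i5 l1 (l3 + s) l4 l5)
    (h3 : Y X i1 i2 i4 i5 l1 (l2 + s) l4 l5)
    (h4 : Y X i1 i2 i3 i5 (l1 + a1) (l2 + a2) (l3 + a3) (l5 + a5)) :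
    Line X := by
  unfold D5 at hD
  by_cases hc : a3 = a5 ∧ a5 < a1
  · obtain ⟨hc, hc'⟩ := hc
    refine Pair (i1 := i2) (i2 := i4) (i3 := i1) (i4 := i3) (i5 := i5) (by unfold D5; grind)
      h2.s23.s12 h4.s12 ?_ ?_ ?_ <;> intro h
    · exfalso; linarith
    · exfalso; linarith
    · refine NE.of_k h3.s12.s23.s34.s23.s12 ?_ ?_ (.inl ?_) <;> linarith
  · refine Pair (i1 := i1) (i2 := i4) (i3 := i2) (i4 := i3) (i5 := i5) (by unfold D5; grind)
      h1.s23.s12 h4 ?_ ?_ ?_ <;> intro h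
    · exfalso; linarith
    · exfalso; linarith
    · have : a3 = a5 := by linarith
      have : a1 ≤ a5 := by by_contra h'; exact hc ⟨this, by linarith⟩
      refine NE.of_k h3.s34.s23.s12.s34 ?_ ?_ (.inl ?_) <;> linarith

theorem P2case {X : Set (Fin 5 → ℝ)} {i1 i2 i3 i4 i5 : Fin 5} {l1 l2 l3 l4 l5 s a1 a2 a3 a5 : ℝ}
    (hD : D5 i1 i2 i3 i4 i5) (hs : 0 ≤ s) (ha1 : a1 = 0) (ha2 : 0 < a2) (ha3 : 0 < a3) (ha5 : 0 < a5)
    (h1 : Y X i2 i3 i4 i5 l2 l3 l4 l5) (h2 : Y X i1 i3 i4 i5 l1 (l3 + s) l4 l5)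
    (h3 : Y X i1 i2 i4 i5 l1 (l2 + s) l4 l5)
    (h4 : Y X i1 i2 i3 i5 (l1 + a1) (l2 + a2) (l3 + a3) (l5 + a5)) :
    Line X := by
  unfold D5 at hD
  by_cases hc : a2 = a3 ∧ 0 < s
  · obtain ⟨hc, hc'⟩ := hc
    rcases le_or_gt a2 a5 with h25 | h25
    · have h5 : Y X i1 i4 i2 i3 l1 (l4 + a5) (l2 + a2) (l3 + a2) := by
        refine Elim (i3 := i5) (u3 := l5 + a5) (u4 := l2 + a5) (u5 := l3 + a5)
          (h1.s23.s34.s12.s23.sh a5 rfl rfl rfl rfl)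
          (h4.s34.s23.cg (by linarith) (by linarith) (by linarith) (by linarith))
          (by linarith) (by linarith) ?_ ?_ <;> intro h
        · refine NE.of_l h2.s34.s23.s12.s34 ?_ ?_ (.inl ?_) <;> linarith
        · refine NE.of_l h3.s34.s23.s12.s34 ?_ ?_ (.inl ?_) <;> linarith
      refine LemB (i1 := i1) (i2 := i4) (i3 := i5) (i4 := i2) (i5 := i3) (l1 := l1) (l2 := l4 + a2)
        (l3 := l5 + a2) (l4 := l2 + a2) (l5 := l3 + a2) (s := a5 - a2) (a1 := a2) (a5 := s)
        (by unfold D5; grind) (by linarith) (by linarith) (by linarith)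
        (h1.s23.s34.s12.s23.sh a2 rfl rfl rfl rfl)
        (h4.s34.s23.cg ?_ ?_ ?_ ?_) (h5.cg ?_ ?_ ?_ ?_) (h2.s23.s34.sh a2 ?_ ?_ ?_ ?_) <;> linarith
    · refine Pair (i1 := i2) (i2 := i4) (i3 := i1) (i4 := i3) (i5 := i5) (by unfold D5; grind)
        h2.s23.s12 h4.s12 ?_ ?_ ?_ <;> intro h
      · refine NE.of_k h1.s12 ?_ ?_ (.inl ?_) <;> linarith
      · exfalso; linarith
      · refine NE.of_k h3.s12.s23.s34.s23.s12 ?_ ?_ (.inl ?_) <;> linarith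
  · refine Pair (i1 := i1) (i2 := i4) (i3 := i2) (i4 := i3) (i5 := i5) (by unfold D5; grind)
      h1.s23.s12 h4 ?_ ?_ ?_ <;> intro h
    · have : a2 = a3 := by linarith
      have : s ≤ 0 := by by_contra h'; exact hc ⟨this, by linarith⟩
      refine NE.of_k h2.s12 ?_ ?_ (.inl ?_) <;> linarith
    · refine NE.of_k h2.s34.s23.s12.s34 ?_ ?_ (.inl ?_) <;> linarith
    · refine NE.of_k h3.s34.s23.s12.s34 ?_ ?_ (.inl ?_) <;> linarith

theorem LemP0 {X : Set (Fin 5 → ℝ)} {i1 i2 i3 i4 i5 : Fin 5} {l1 l2 l3 l4 l5 s a1 a2 a3 a5 : ℝ}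
    (hD : D5 i1 i2 i3 i4 i5) (hs : 0 ≤ s) (ha1 : 0 ≤ a1) (ha2 : 0 ≤ a2) (ha3 : 0 ≤ a3)
    (ha : a1 = 0 ∨ a2 = 0 ∨ a3 = 0)
    (h1 : Y X i2 i3 i4 i5 l2 l3 l4 l5) (h2 : Y X i1 i3 i4 i5 l1 (l3 + s) l4 l5)
    (h3 : Y X i1 i2 i4 i5 l1 (l2 + s) l4 l5)
    (h4 : Y X i1 i2 i3 i5 (l1 + a1) (l2 + a2) (l3 + a3) (l5 + a5)) :
    Line X := by
  rcases le_or_gt a5 0 with h5 | h5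
  · refine Pair hD h1 h2 ?_ ?_ ?_ <;> intro h
    · refine NE.of_k h3.s23.s12 ?_ ?_ (.inl ?_) <;> linarith
    · refine NE.of_k h3.s34.s23.s12 ?_ ?_ (.inl ?_) <;> linarith
    · refine NE.of_k h4.s34.s23.s12 ?_ ?_ (.inl ?_) <;> linarith
  · rcases ha2.eq_or_lt with h20 | h20
    · rcases ha3.eq_or_lt with h30 | h30
      · exact LemB hD hs ha1 h5.le h1 h2 h3 (h4.cg rfl (by linarith) (by linarith) rfl)
      · exact P1case hD hs ha1 h20.symm h30 h5 h1 h2 h3 h4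
    · rcases ha3.eq_or_lt with h30 | h30
      · exact P1case (by unfold D5 at *; grind) hs ha1 h30.symm h20 h5 h1.s12 h3 h2 h4.s23
      · exact P2case hD hs (by rcases ha with h | h | h <;> linarith) h20 h30 h5 h1 h2 h3 h4

theorem LemP {X : Set (Fin 5 → ℝ)} {i1 i2 i3 i4 i5 : Fin 5} {l1 l2 l3 l4 l5 s a1 a2 a3 a5 : ℝ}
    (hD : D5 i1 i2 i3 i4 i5) (hs : 0 ≤ s)
    (h1 : Y X i2 i3 i4 i5 l2 l3 l4 l5) (h2 : Y X i1 i3 i4 i5 l1 (l3 + s) l4 l5)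
    (h3 : Y X i1 i2 i4 i5 l1 (l2 + s) l4 l5)
    (h4 : Y X i1 i2 i3 i5 a1 a2 a3 a5) :
    Line X := by
  obtain ⟨m, m1, m2, m3, hm⟩ : ∃ m : ℝ, 0 ≤ a1 - l1 - m ∧ 0 ≤ a2 - l2 - m ∧ 0 ≤ a3 - l3 - m ∧
      (a1 - l1 - m = 0 ∨ a2 - l2 - m = 0 ∨ a3 - l3 - m = 0) := by
    rcases le_total (a1 - l1) (a2 - l2) with h | h <;> rcases le_total (a1 - l1) (a3 - l3) with h' | h'
      <;> rcases le_total (a2 - l2) (a3 - l3) with hk | hk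
    all_goals first
      | exact ⟨a1 - l1, by linarith, by linarith, by linarith, .inl (by linarith)⟩
      | exact ⟨a2 - l2, by linarith, by linarith, by linarith, .inr (.inl (by linarith))⟩
      | exact ⟨a3 - l3, by linarith, by linarith, by linarith, .inr (.inr (by linarith))⟩
  exact LemP0 (a5 := a5 - l5 - m) hD hs m1 m2 m3 hm h1 h2 h3
    (h4.sh (-m) (by ring) (by ring) (by ring) (by ring))

theorem OneTie {X : Set (Fin 5 → ℝ)} {z : Fin 5 → Fin 5 → ℝ}
    (hz : ∀ a b c d e, D5 a b c d e → Y X b c d e (z a b) (z a c) (z a d) (z a e))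
    {a b c d e : Fin 5} (hD : D5 a b c d e) (h1 : z a d - z b d = z a e - z b e)
    (h2 : z a c - z b c < z a d - z b d) : Line X := by
  have hu := hz a b c d e hD
  have hv := hz b a c d e (by unfold D5 at *; grind)
  have h4 := hz d a b c e (by unfold D5 at *; grind)
  have hv' : Y X a c d e (z b a + (z a d - z b d)) (z a c + (z a d - z b d - (z a c - z b c)))
      (z a d) (z a e) := hv.sh (z a d - z b d) rfl (by ring) (by ring) (by linarith)
  have h3 := Elim (hu.sh (z a d - z b d - (z a c - z b c)) rfl rfl rfl rfl) hv'
    (by linarith) (by linarith) (fun h => by exfalso; linarith) (fun h => by exfalso; linarith)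
  exact LemP hD (by linarith) hu hv' h3 h4

theorem mainComb {X : Set (Fin 5 → ℝ)} {z : Fin 5 → Fin 5 → ℝ}
    (hz : ∀ a b c d e, D5 a b c d e → Y X b c d e (z a b) (z a c) (z a d) (z a e)) : Line X := by
  by_contra hL
  have key : ∀ a b c d e, D5 a b c d e → z a c - z b c = z a d - z b d := by
    intro a b c d e hD
    have one : ∀ c d e, D5 a b c d e → z a d - z b d = z a e - z b e →
        z a c - z b c = z a d - z b d := by
      intro c d e hD h
      rcases lt_trichotomy (z a c - z b c) (z a d - z b d) with h' | h' | h'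
      · exact (hL (OneTie hz hD h h')).elim
      · exact h'
      · exact (hL (OneTie hz (a := b) (b := a) (c := c) (d := d) (e := e)
          (by unfold D5 at *; grind) (by linarith) (by linarith))).elim
    by_contra hne
    refine hL (Pair hD (hz a b c d e hD) (hz b a c d e (by unfold D5 at *; grind)) ?_ ?_ ?_) <;>
      intro h
    · exact absurd h hne
    · have := one d c e (by unfold D5 at *; grind) h
      exact absurd this.symm hne
    · exact absurd (one c d e hD h) hne
  have k01 := key 0 1 2 3 4 (by unfold D5; decide)
  have k01' := key 0 1 2 4 3 (by unfold D5; decide)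
  have k12 := key 1 2 0 3 4 (by unfold D5; decide)
  have k12' := key 1 2 0 4 3 (by unfold D5; decide)
  have k02 := key 0 2 1 3 4 (by unfold D5; decide)
  have k02' := key 0 2 1 4 3 (by unfold D5; decide)
  have k13 := key 1 3 0 2 4 (by unfold D5; decide)
  have k13' := key 1 3 0 4 2 (by unfold D5; decide)
  have k03 := key 0 3 1 2 4 (by unfold D5; decide)
  have k03' := key 0 3 1 4 2 (by unfold D5; decide)
  have k14 := key 1 4 0 2 3 (by unfold D5; decide)
  have k14' := key 1 4 0 3 2 (by unfold D5; decide)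
  have k04 := key 0 4 1 2 3 (by unfold D5; decide)
  have k04' := key 0 4 1 3 2 (by unfold D5; decide)
  apply hL
  refine ⟨0, 1, 2, 3, 4, z 1 0 - z 1 2 + z 0 2, z 0 1, z 0 2, z 0 3, z 0 4, 0, 0, by unfold D5; decide,
    le_rfl, le_rfl, (hz 0 1 2 3 4 (by unfold D5; decide)).sh 0 ?_ ?_ ?_ ?_,
    (hz 1 0 2 3 4 (by unfold D5; decide)).sh (z 0 2 - z 1 2) ?_ ?_ ?_ ?_,
    (hz 2 0 1 3 4 (by unfold D5; decide)).sh (z 0 3 - z 2 3) ?_ ?_ ?_ ?_,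
    (hz 3 0 1 2 4 (by unfold D5; decide)).sh (z 0 2 - z 3 2) ?_ ?_ ?_ ?_,
    (hz 4 0 1 2 3 (by unfold D5; decide)).sh (z 0 2 - z 4 2) ?_ ?_ ?_ ?_⟩ <;> linarith

theorem erase_ne4 (i : Fin 4) : ((Finset.univ : Finset (Fin 4)).erase i).Nonempty :=
  ⟨i + 1, by simp⟩

/-- The max-min operator attached to a `4 × n` matrix. -/
def fop {n : ℕ} [NeZero n] (M : Fin 4 → Fin n → ℝ) (u : Fin 4 → ℝ) (i : Fin 4) : ℝ :=
  Finset.univ.sup' Finset.univ_nonempty fun x =>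
    (Finset.univ.erase i).inf' (erase_ne4 i) fun j => u j + M j x - M i x

theorem fop_le {n : ℕ} [NeZero n] {M : Fin 4 → Fin n → ℝ} {u v : Fin 4 → ℝ} {i : Fin 4} {c : ℝ}
    (h : ∀ j, u j ≤ v j + c) : fop M u i ≤ fop M v i + c := by
  unfold fop
  refine Finset.sup'_le _ _ fun x _ => ?_
  have h1 : (Finset.univ.erase i).inf' (erase_ne4 i) (fun j => v j + M j x - M i x) ≤ fop M v i :=
    Finset.le_sup' (fun x => (Finset.univ.erase i).inf' (erase_ne4 i)
      fun j => v j + M j x - M i x) (Finset.mem_univ x)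
  refine le_trans ?_ (add_le_add_left h1 c)
  rw [← sub_le_iff_le_add]
  refine Finset.le_inf' _ _ fun j hj => ?_
  have h2 := Finset.inf'_le (fun j => u j + M j x - M i x) hj
  have := h j
  linarith

theorem fop_le_of {n : ℕ} [NeZero n] {M : Fin 4 → Fin n → ℝ} {u : Fin 4 → ℝ} {i j : Fin 4} {C : ℝ}
    (hC : ∀ i j x, M j x - M i x ≤ C) (hj : j ≠ i) : fop M u i ≤ u j + C := by
  unfold fop
  refine Finset.sup'_le _ _ fun x _ => ?_
  have h2 := Finset.inf'_le (fun j => u j + M j x - M i x)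
    (Finset.mem_erase.2 ⟨hj, Finset.mem_univ j⟩)
  have := hC i j x
  linarith

theorem le_fop_of {n : ℕ} [NeZero n] {M : Fin 4 → Fin n → ℝ} {u : Fin 4 → ℝ} {i : Fin 4} {C y : ℝ}
    (hC : ∀ i j x, M j x - M i x ≤ C) (hy : ∀ j, y ≤ u j) : y - C ≤ fop M u i := by
  unfold fop
  refine Finset.le_sup'_of_le _ (Finset.mem_univ (0 : Fin n)) ?_
  refine Finset.le_inf' _ _ fun j hj => ?_
  have := hC j i 0
  have := hy j
  linarith

theorem lt_fop {n : ℕ} [NeZero n] {M : Fin 4 → Fin n → ℝ} {u : Fin 4 → ℝ} {i : Fin 4}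
    (h : u i < fop M u i) : ∃ x, ∀ j, j ≠ i → u i + M i x < u j + M j x := by
  unfold fop at h
  rw [Finset.lt_sup'_iff] at h
  obtain ⟨x, _, hx⟩ := h
  refine ⟨x, fun j hj => ?_⟩
  rw [Finset.lt_inf'_iff] at hx
  have := hx j (Finset.mem_erase.2 ⟨hj, Finset.mem_univ j⟩)
  linarith

theorem fop_lip {n : ℕ} [NeZero n] (M : Fin 4 → Fin n → ℝ) (u v : Fin 4 → ℝ) :
    dist (fop M u) (fop M v) ≤ dist u v := by
  rw [dist_pi_le_iff dist_nonneg]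
  intro i
  have h1 : fop M u i ≤ fop M v i + dist u v := fop_le fun j => by
    have := dist_le_pi_dist u v j
    rw [Real.dist_eq, abs_le] at this
    linarith
  have h2 : fop M v i ≤ fop M u i + dist u v := fop_le fun j => by
    have := dist_le_pi_dist u v j
    rw [Real.dist_eq, abs_le] at this
    linarith
  rw [Real.dist_eq, abs_le]
  constructor <;> linarith

theorem fop_cont {n : ℕ} [NeZero n] (M : Fin 4 → Fin n → ℝ) : Continuous (fop M) :=
  (LipschitzWith.of_dist_le_mul (K := 1) fun u v => by simpa using fop_lip M u v).continuous

theorem exists_fix {n : ℕ} [NeZero n] (M : Fin 4 → Fin n → ℝ) (α : ℝ) (h0 : 0 < α) (h1 : α < 1) :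
    ∃ u : Fin 4 → ℝ, ∀ i, u i = α * fop M u i := by
  have hc : ContractingWith ⟨α, h0.le⟩ (fun u : Fin 4 → ℝ => α • fop M u) := by
    refine ⟨by exact_mod_cast h1, LipschitzWith.of_dist_le_mul fun u v => ?_⟩
    rw [dist_smul₀, Real.norm_of_nonneg h0.le]
    exact mul_le_mul_of_nonneg_left (fop_lip M u v) h0.le
  have := hc.fixedPoint_isFixedPt
  exact ⟨ContractingWith.fixedPoint _ hc, fun i => (congrFun this i).symm⟩

theorem not_all_lt {n : ℕ} [NeZero n] (M : Fin 4 → Fin n → ℝ)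
    (hs : ∀ c : Fin 4 → Fin n, Function.Injective c →
      TropSingular (Matrix.of fun i j => M i (c j))) (u : Fin 4 → ℝ)
    (hu : ∀ i, u i < fop M u i) : False := by
  choose c hc using fun i => lt_fop (hu i)
  have hinj : Function.Injective c := by
    intro i j hij
    by_contra hne
    have h1 := hc i j (Ne.symm hne)
    have h2 := hc j i hne
    rw [hij] at h1
    linarith
  obtain ⟨σ, τ, hne, heq, hmin⟩ := hs c hinj
  have hm := hmin 1
  have key : ∀ ρ : Equiv.Perm (Fin 4), (∑ i, M i (c (ρ i)) ≤ ∑ i, M i (c i)) → ρ = 1 := by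
    intro ρ hρ
    by_contra hρ1
    obtain ⟨i0, hi0⟩ : ∃ i, ρ i ≠ i := by
      by_contra! h
      exact hρ1 (Equiv.ext h)
    have : ∑ i, (u (ρ i) + M (ρ i) (c (ρ i))) < ∑ i, (u i + M i (c (ρ i))) := by
      refine Finset.sum_lt_sum (fun i _ => ?_) ⟨i0, Finset.mem_univ _, hc _ _ (Ne.symm hi0)⟩
      by_cases h : ρ i = i
      · rw [h]
      · exact (hc _ _ (Ne.symm h)).le
    rw [Equiv.sum_comp ρ (fun i => u i + M i (c i))] at this
    simp only [Finset.sum_add_distrib] at this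
    linarith
  have h1 : σ = 1 := key σ (by simpa using hm)
  have h2 : τ = 1 := key τ (by rw [heq] at hm; simpa using hm)
  exact hne (h1.trans h2.symm)

theorem stepH {n : ℕ} [NeZero n] (M : Fin 4 → Fin n → ℝ)
    (hs : ∀ c : Fin 4 → Fin n, Function.Injective c →
      TropSingular (Matrix.of fun i j => M i (c j))) :
    ∃ u : Fin 4 → ℝ, ∀ x i, ∃ j, j ≠ i ∧ u j + M j x ≤ u i + M i x := by
  obtain ⟨C, hC0, hC⟩ : ∃ C : ℝ, 0 ≤ C ∧ ∀ i j x, M j x - M i x ≤ C := by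
    obtain ⟨C, hC⟩ := (Set.finite_range
      (fun p : Fin 4 × Fin 4 × Fin n => M p.2.1 p.2.2 - M p.1 p.2.2)).bddAbove
    exact ⟨max C 0, le_max_right _ _, fun i j x =>
      (hC ⟨(i, j, x), rfl⟩).trans (le_max_left _ _)⟩
  have approx : ∀ α : ℝ, 0 < α → α < 1 → ∃ v ∈ Set.Icc (0 : Fin 4 → ℝ) (fun _ => 2 * C),
      ∀ i, fop M v i - v i ≤ (1 - α) * C := by
    intro α h0 h1
    obtain ⟨u, hu⟩ := exists_fix M α h0 h1
    obtain ⟨k, hk⟩ := Finite.exists_min u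
    have hk0 : u k ≤ 0 := by
      by_contra! hpos
      refine not_all_lt M hs u fun i => ?_
      have hi : 0 < u i := hpos.trans_le (hk i)
      have := hu i
      have hf : 0 < fop M u i := by
        by_contra! hf
        nlinarith
      nlinarith
    have hlow := le_fop_of (i := k) hC hk
    have hkk := hu k
    have hA : -(α * C) ≤ (1 - α) * u k := by nlinarith
    refine ⟨fun i => u i - u k, ⟨fun i => ?_, fun i => ?_⟩, fun i => ?_⟩
    · simpa using hk i
    · by_cases hik : i = k
      · subst hik; simp; linarith
      · have := fop_le_of (u := u) hC (Ne.symm hik)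
        have h3 := hu i
        have : u i ≤ α * (u k + C) := by rw [h3]; exact mul_le_mul_of_nonneg_left this h0.le
        show u i - u k ≤ 2 * C
        nlinarith
    · have hsh : fop M (fun i => u i - u k) i ≤ fop M u i + (- u k) :=
        fop_le fun j => by simp [sub_eq_add_neg]
      have h3 := hu i
      show _ - (u i - u k) ≤ _
      suffices fop M u i - u i ≤ (1 - α) * C by linarith
      have h4 : fop M u i - u i = (1 - α) * fop M u i := by rw [h3]; linarith
      by_cases hik : i = k
      · subst hik
        have : fop M u i ≤ 0 := by
          by_contra! hf
          nlinarith
        nlinarith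
      · have := fop_le_of (u := u) hC (Ne.symm hik)
        nlinarith
  let φ : (Fin 4 → ℝ) → ℝ := fun u => ∑ i, max 0 (fop M u i - u i)
  have hφ : Continuous φ := by
    have := fop_cont M
    have h' : ∀ i, Continuous fun u => fop M u i := fun i => (continuous_apply i).comp this
    fun_prop
  obtain ⟨u, hu, hmin⟩ := (isCompact_Icc (a := (0 : Fin 4 → ℝ)) (b := fun _ => 2 * C)).exists_isMinOn
    ⟨0, by simp, fun _ => by simpa using hC0⟩ hφ.continuousOn
  have hφ0 : φ u ≤ 0 := by
    by_contra! hpos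
    set m := φ u
    have hden : 0 < 8 * (C + m) := by linarith
    have hq : m / (8 * (C + m)) < 1 := by rw [div_lt_one hden]; linarith
    have hq0 : 0 < m / (8 * (C + m)) := div_pos hpos hden
    obtain ⟨v, hv, hv'⟩ := approx (1 - m / (8 * (C + m))) (by linarith) (by linarith)
    have h1 : m ≤ φ v := hmin hv
    have h2 : φ v ≤ ∑ i : Fin 4, m / (8 * (C + m)) * C := by
      refine Finset.sum_le_sum fun i _ => max_le (by positivity) ?_
      have := hv' i
      linarith
    simp at h2
    have h3 : m / (8 * (C + m)) * C ≤ m / 8 := by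
      rw [div_mul_eq_mul_div, div_le_div_iff₀ hden (by norm_num)]
      nlinarith
    linarith
  refine ⟨u, fun x i => ?_⟩
  have h1 : max 0 (fop M u i - u i) ≤ φ u :=
    Finset.single_le_sum (f := fun i => max 0 (fop M u i - u i)) (fun i _ => le_max_left _ _)
      (Finset.mem_univ i)
  have h2 : fop M u i ≤ u i := by
    have := le_max_right 0 (fop M u i - u i)
    linarith
  by_contra! hcon
  have h3 : u i < fop M u i := by
    unfold fop
    rw [Finset.lt_sup'_iff]
    refine ⟨x, Finset.mem_univ _, ?_⟩
    rw [Finset.lt_inf'_iff]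
    intro j hj
    have := hcon j (Finset.ne_of_mem_erase hj)
    linarith
  linarith

/-- `z` has valuation exactly `g`. -/
def Val (z : K) (g : ℝ) : Prop := z.coeff g ≠ 0 ∧ ∀ h < g, z.coeff h = 0

theorem Val.ne {z : K} {g : ℝ} (h : Val z g) : z ≠ 0 := by
  rintro rfl
  exact h.1 (by simp)

theorem Val.order {z : K} {g : ℝ} (h : Val z g) : z.order = g := by
  refine le_antisymm (HahnSeries.order_le_of_coeff_ne_zero h.1) ?_
  by_contra! hlt
  exact h.ne (HahnSeries.coeff_order_eq_zero.1 (h.2 _ hlt))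

theorem Val.of {z : K} {g : ℝ} (h0 : z ≠ 0) (h : z.order = g) : Val z g := by
  subst h
  exact ⟨fun h => h0 (HahnSeries.coeff_order_eq_zero.1 h),
    fun _ hh => HahnSeries.coeff_eq_zero_of_lt_order hh⟩

theorem Val.single (g : ℝ) {c : ℂ} (hc : c ≠ 0) : Val (HahnSeries.single g c) g :=
  Val.of (by simpa using hc) (HahnSeries.order_single hc)

theorem Val.of_mul {z d : K} {g m : ℝ} (hd : Val d m) (h : Val (z * d) (m + g)) : Val z g := by
  have hz : z ≠ 0 := fun h0 => h.ne (by rw [h0, zero_mul])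
  refine Val.of hz ?_
  have := h.order
  rw [HahnSeries.order_mul hz hd.ne, hd.order] at this
  linarith

theorem Val.mul {z d : K} {g m : ℝ} (hz : Val z g) (hd : Val d m) : Val (z * d) (g + m) :=
  Val.of (mul_ne_zero hz.ne hd.ne) (by rw [HahnSeries.order_mul hz.ne hd.ne, hz.order, hd.order])

theorem Val.neg {z : K} {g : ℝ} (h : Val z g) : Val (-z) g := by
  refine ⟨?_, fun g' hg => ?_⟩
  · rw [HahnSeries.coeff_neg]; exact neg_ne_zero.2 h.1
  · rw [HahnSeries.coeff_neg, h.2 _ hg, neg_zero]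

/-- Generic point avoiding two nonzero linear forms. -/
theorem exists_generic (S : Finset (Fin 5)) (α β : Fin 5 → ℂ) (hα : ∃ k ∈ S, α k ≠ 0)
    (hβ : ∃ k ∈ S, β k ≠ 0) : ∃ c : Fin 5 → ℂ, (∀ k, c k ≠ 0) ∧ ∑ k ∈ S, c k * α k ≠ 0 ∧
      ∑ k ∈ S, c k * β k ≠ 0 := by
  have key : ∀ α : Fin 5 → ℂ, (∃ k ∈ S, α k ≠ 0) →
      (∑ k ∈ S, Polynomial.C (α k) * Polynomial.X ^ (k : ℕ)) ≠ 0 := by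
    rintro α ⟨k, hk, hne⟩ h0
    apply hne
    have := congrArg (fun p => Polynomial.coeff p (k : ℕ)) h0
    simp only [Polynomial.finsetSum_coeff, Polynomial.coeff_C_mul_X_pow, Polynomial.coeff_zero]
      at this
    rw [Finset.sum_eq_single k] at this
    · simpa using this
    · intro b _ hb
      rw [if_neg]
      intro h
      exact hb (Fin.ext h.symm)
    · exact fun h => absurd hk h
  have hR : Polynomial.X * ((∑ k ∈ S, Polynomial.C (α k) * Polynomial.X ^ (k : ℕ)) *
      (∑ k ∈ S, Polynomial.C (β k) * Polynomial.X ^ (k : ℕ))) ≠ 0 :=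
    mul_ne_zero Polynomial.X_ne_zero (mul_ne_zero (key α hα) (key β hβ))
  obtain ⟨t, ht⟩ : ∃ t : ℂ, Polynomial.eval t (Polynomial.X *
      ((∑ k ∈ S, Polynomial.C (α k) * Polynomial.X ^ (k : ℕ)) *
      (∑ k ∈ S, Polynomial.C (β k) * Polynomial.X ^ (k : ℕ)))) ≠ 0 := by
    by_contra! h
    exact hR (Polynomial.funext fun t => by rw [h t, Polynomial.eval_zero])
  simp only [Polynomial.eval_mul, Polynomial.eval_X, Polynomial.eval_finsetSum, Polynomial.eval_C,
    Polynomial.eval_pow] at ht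
  have h1 := left_ne_zero_of_mul ht
  have h2 := right_ne_zero_of_mul ht
  refine ⟨fun k => t ^ (k : ℕ), fun k => pow_ne_zero _ h1, ?_, ?_⟩
  · have := left_ne_zero_of_mul h2
    simpa only [mul_comm] using this
  · have := right_ne_zero_of_mul h2
    simpa only [mul_comm] using this

theorem val_sum (S : Finset (Fin 5)) (c : Fin 5 → ℂ) (x : Fin 5 → ℝ) (d : Fin 5 → K) (m : Fin 5 → ℝ)
    (g : ℝ) (hd : ∀ k ∈ S, Val (d k) (m k)) (hm : ∀ k ∈ S, g ≤ m k + x k)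
    (hc : ∑ k ∈ S, c k * (d k).coeff (g - x k) ≠ 0) :
    Val (∑ k ∈ S, HahnSeries.single (x k) (c k) * d k) g := by
  refine ⟨?_, fun h hh => ?_⟩
  · rw [HahnSeries.coeff_sum]
    simpa only [HahnSeries.coeff_single_mul] using hc
  · rw [HahnSeries.coeff_sum]
    refine Finset.sum_eq_zero fun k hk => ?_
    rw [HahnSeries.coeff_single_mul, (hd k hk).2, mul_zero]
    have := hm k hk
    linarith

theorem col (p q : Fin 5 → K) (P : Fin 5 → Fin 5 → ℝ) (x : Fin 5 → ℝ)
    (hsym : ∀ i j, P i j = P j i)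
    (hd : ∀ i j, i ≠ j → Val (p i * q j - p j * q i) (P i j))
    (hC : ∀ j i, i ≠ j → ∃ k, k ≠ i ∧ k ≠ j ∧ P k j + x k ≤ P i j + x i) :
    ∃ z : Fin 5 → K, (∀ i, Val (z i) (x i)) ∧ ∑ i, p i * z i = 0 ∧ ∑ i, q i * z i = 0 := by
  obtain ⟨⟨i, j⟩, hij, hmin⟩ := Finset.exists_min_image
    (Finset.univ.filter fun r : Fin 5 × Fin 5 => r.1 ≠ r.2)
    (fun r => P r.1 r.2 + x r.1 + x r.2) ⟨(0, 1), by simp⟩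
  simp only [Finset.mem_filter, Finset.mem_univ, true_and] at hij hmin
  let S : Finset (Fin 5) := (Finset.univ.erase i).erase j
  have hS : ∀ k, k ∈ S ↔ k ≠ j ∧ k ≠ i := fun k => by simp [S]
  have hm1 : ∀ k ∈ S, P i j + x i ≤ P k j + x k := fun k hk => by
    have := hmin (k, j) ((hS k).1 hk).1
    simp only at this; linarith
  have hm2 : ∀ k ∈ S, P i j + x j ≤ P k i + x k := fun k hk => by
    have := hmin (k, i) ((hS k).1 hk).2
    simp only at this; linarith
  have hα : ∃ k ∈ S, (p k * q j - p j * q k).coeff (P i j + x i - x k) ≠ 0 := by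
    obtain ⟨k, h1, h2, h3⟩ := hC j i hij
    have hk := (hS k).2 ⟨h2, h1⟩
    refine ⟨k, hk, ?_⟩
    have := hm1 k hk
    rw [show P i j + x i - x k = P k j by linarith]
    exact (hd k j h2).1
  have hβ : ∃ k ∈ S, (p k * q i - p i * q k).coeff (P i j + x j - x k) ≠ 0 := by
    obtain ⟨k, h1, h2, h3⟩ := hC i j (Ne.symm hij)
    have hk := (hS k).2 ⟨h1, h2⟩
    refine ⟨k, hk, ?_⟩
    have := hm2 k hk
    rw [hsym j i] at h3
    rw [show P i j + x j - x k = P k i by linarith]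
    exact (hd k i h2).1
  obtain ⟨c, hc0, hc1, hc2⟩ := exists_generic S _ _ hα hβ
  set N1 : K := ∑ k ∈ S, HahnSeries.single (x k) (c k) * (p k * q j - p j * q k) with hN1
  set N2 : K := ∑ k ∈ S, HahnSeries.single (x k) (c k) * (p k * q i - p i * q k) with hN2
  have v1 : Val N1 (P i j + x i) := val_sum S c x _ (fun k => P k j) _
    (fun k hk => hd k j ((hS k).1 hk).1) hm1 hc1
  have v2 : Val N2 (P i j + x j) := val_sum S c x _ (fun k => P k i) _
    (fun k hk => hd k i ((hS k).1 hk).2) hm2 hc2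
  have vd := hd i j hij
  set D : K := p i * q j - p j * q i with hD
  have hD0 : D ≠ 0 := vd.ne
  let z : Fin 5 → K := fun k => if k = i then - N1 / D else if k = j then N2 / D else
    HahnSeries.single (x k) (c k)
  have zi : z i = - N1 / D := by simp [z]
  have zj : z j = N2 / D := by simp [z, Ne.symm hij]
  have zk : ∀ k ∈ S, z k = HahnSeries.single (x k) (c k) := fun k hk => by
    have := (hS k).1 hk
    simp [z, this.1, this.2]
  have sum0 : ∀ r : Fin 5 → K, (∀ k, D * r k = (p k * q j - p j * q k) * r i -
      (p k * q i - p i * q k) * r j) → ∑ k, r k * z k = 0 := by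
    intro r hr
    have hj : j ∈ Finset.univ.erase i := by simp [Ne.symm hij]
    rw [← Finset.add_sum_erase _ _ (Finset.mem_univ i), ← Finset.add_sum_erase _ _ hj, zi, zj]
    have : ∑ k ∈ S, r k * z k = (N1 * r i - N2 * r j) / D := by
      rw [eq_div_iff hD0, Finset.sum_mul, hN1, hN2, Finset.sum_mul, Finset.sum_mul,
        ← Finset.sum_sub_distrib]
      refine Finset.sum_congr rfl fun k hk => ?_
      rw [zk k hk]
      linear_combination (HahnSeries.single (x k) (c k)) * hr k
    change _ + (_ + ∑ k ∈ S, r k * z k) = 0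
    rw [this]
    field_simp
    ring
  refine ⟨z, fun k => ?_, sum0 p fun k => ?_, sum0 q fun k => ?_⟩
  · by_cases hki : k = i
    · subst hki
      refine Val.of_mul vd ?_
      rw [zi, div_mul_cancel₀ _ hD0]
      exact v1.neg
    · by_cases hkj : k = j
      · subst hkj
        refine Val.of_mul vd ?_
        rw [zj, div_mul_cancel₀ _ hD0]
        exact v2
      · rw [zk k ((hS k).2 ⟨hkj, hki⟩)]
        exact Val.single _ (hc0 k)
  · rw [hD]; ring
  · rw [hD]; ring

theorem D5.inj {a b c d e : Fin 5} (h : D5 a b c d e) : Function.Injective ![a, b, c, d, e] := by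
  rw [← List.nodup_ofFn]
  simpa [D5] using h

theorem D5.exh {a b c d e : Fin 5} (h : D5 a b c d e) (i : Fin 5) :
    i = a ∨ i = b ∨ i = c ∨ i = d ∨ i = e := by
  obtain ⟨k, hk⟩ := (Finite.injective_iff_surjective.1 h.inj) i
  subst hk
  fin_cases k <;> simp

theorem T4.ex {f : Fin 5 → ℝ} {j b c d e : Fin 5} (hD : D5 j b c d e)
    (h : T4 (f b) (f c) (f d) (f e)) (i : Fin 5) (hi : i ≠ j) :
    ∃ k, k ≠ i ∧ k ≠ j ∧ f k ≤ f i := by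
  have hx := hD.exh i
  unfold D5 at hD
  obtain ⟨h1, h2, h3, h4⟩ := h
  rcases hx with rfl | rfl | rfl | rfl | rfl
  · exact absurd rfl hi
  · rcases h1 with h | h | h
    · exact ⟨c, by grind, by grind, h⟩
    · exact ⟨d, by grind, by grind, h⟩
    · exact ⟨e, by grind, by grind, h⟩
  · rcases h2 with h | h | h
    · exact ⟨b, by grind, by grind, h⟩
    · exact ⟨d, by grind, by grind, h⟩
    · exact ⟨e, by grind, by grind, h⟩
  · rcases h3 with h | h | h
    · exact ⟨b, by grind, by grind, h⟩
    · exact ⟨c, by grind, by grind, h⟩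
    · exact ⟨e, by grind, by grind, h⟩
  · rcases h4 with h | h | h
    · exact ⟨b, by grind, by grind, h⟩
    · exact ⟨c, by grind, by grind, h⟩
    · exact ⟨d, by grind, by grind, h⟩

theorem T4.of_ex {f : Fin 5 → ℝ} {j b c d e : Fin 5} (hD : D5 j b c d e)
    (h : ∀ i, i ≠ j → ∃ k, k ≠ i ∧ k ≠ j ∧ f k ≤ f i) : T4 (f b) (f c) (f d) (f e) := by
  have hD' := hD
  unfold D5 at hD'
  refine ⟨?_, ?_, ?_, ?_⟩
  · obtain ⟨k, h1, h2, h3⟩ := h b (by grind)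
    rcases hD.exh k with rfl | rfl | rfl | rfl | rfl <;> tauto
  · obtain ⟨k, h1, h2, h3⟩ := h c (by grind)
    rcases hD.exh k with rfl | rfl | rfl | rfl | rfl <;> tauto
  · obtain ⟨k, h1, h2, h3⟩ := h d (by grind)
    rcases hD.exh k with rfl | rfl | rfl | rfl | rfl <;> tauto
  · obtain ⟨k, h1, h2, h3⟩ := h e (by grind)
    rcases hD.exh k with rfl | rfl | rfl | rfl | rfl <;> tauto

theorem val_two_add (s1 s2 : ℝ) (h1 : 0 ≤ s1) (h2 : 0 ≤ s2) (α β : ℂ)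
    (hα : α = 0 ∨ α = 1) (hβ : β = 0 ∨ β = 1) :
    Val (2 + HahnSeries.single s2 α - HahnSeries.single s1 β) 0 := by
  have e2 : (2 : K) = HahnSeries.single 0 2 := by
    have : (2 : K) = 1 + 1 := by norm_num
    rw [this, ← HahnSeries.single_zero_one, ← HahnSeries.single_add]; norm_num
  rw [e2]
  refine ⟨?_, fun h hh => ?_⟩
  · simp only [HahnSeries.coeff_sub, HahnSeries.coeff_add, HahnSeries.coeff_single]
    rcases hα with rfl | rfl <;> rcases hβ with rfl | rfl <;> split_ifs <;> norm_num
  · simp only [HahnSeries.coeff_sub, HahnSeries.coeff_add]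
    rw [HahnSeries.coeff_single_of_ne (by linarith), HahnSeries.coeff_single_of_ne (by linarith),
      HahnSeries.coeff_single_of_ne (by linarith)]
    norm_num

/-- The weights attached to pairs. -/
def PW (s1 s2 : ℝ) : Fin 5 → Fin 5 → ℝ :=
  ![![0, s1, 0, 0, 0], ![s1, 0, 0, 0, 0], ![0, 0, 0, 0, 0], ![0, 0, 0, 0, s2], ![0, 0, 0, s2, 0]]

def pv : Fin 5 → K := ![1, 1, 0, 1, 1]
def qv (s1 s2 : ℝ) : Fin 5 → K :=
  ![0, HahnSeries.single s1 1, 1, 2, 2 + HahnSeries.single s2 1]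

theorem PW_symm (s1 s2 : ℝ) (i j : Fin 5) : PW s1 s2 i j = PW s1 s2 j i := by
  fin_cases i <;> fin_cases j <;> rfl

theorem val_pq (s1 s2 : ℝ) (h1 : 0 ≤ s1) (h2 : 0 ≤ s2) (i j : Fin 5) (hij : i ≠ j) :
    Val (pv i * qv s1 s2 j - pv j * qv s1 s2 i) (PW s1 s2 i j) := by
  have t1 : Val (HahnSeries.single s1 (1 : ℂ)) s1 := Val.single _ one_ne_zero
  have t2 : Val (HahnSeries.single s2 (1 : ℂ)) s2 := Val.single _ one_ne_zero
  have v1 : Val (1 : K) 0 := by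
    rw [← HahnSeries.single_zero_one]; exact Val.single _ one_ne_zero
  have w1 := val_two_add s1 s2 h1 h2 0 0 (by simp) (by simp)
  have w2 := val_two_add s1 s2 h1 h2 1 0 (by simp) (by simp)
  have w3 := val_two_add s1 s2 h1 h2 0 1 (by simp) (by simp)
  have w4 := val_two_add s1 s2 h1 h2 1 1 (by simp) (by simp)
  simp only [HahnSeries.single_eq_zero, add_zero, sub_zero] at w1 w2 w3
  have key : ∀ i j : Fin 5, i < j → Val (pv i * qv s1 s2 j - pv j * qv s1 s2 i) (PW s1 s2 i j) := by
    intro i j hij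
    fin_cases i <;> fin_cases j <;> first | (exfalso; revert hij; decide) | skip
    · convert t1 using 1 <;> simp [pv, qv, PW]
    · convert v1 using 1 <;> simp [pv, qv, PW]
    · convert w1 using 1 <;> simp [pv, qv, PW]
    · convert w2 using 1 <;> simp [pv, qv, PW]
    · convert v1 using 1 <;> simp [pv, qv, PW]
    · convert w3 using 1 <;> simp [pv, qv, PW]
    · convert w4 using 1 <;> simp [pv, qv, PW]
    · convert v1.neg using 1 <;> simp [pv, qv, PW]
    · convert v1.neg using 1 <;> simp [pv, qv, PW]
    · convert t2 using 1 <;> simp [pv, qv, PW]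
  rcases lt_or_gt_of_ne hij with h | h
  · exact key i j h
  · have := (key j i h).neg
    rw [PW_symm]
    convert this using 1
    ring

theorem lift_of_Line {n : ℕ} (A : Matrix (Fin 5) (Fin n) ℝ)
    (h : Line (Set.range fun j i => A i j)) :
    ∃ B : Matrix (Fin 5) (Fin n) K, IsLift A B ∧ B.rank ≤ 3 := by
  obtain ⟨a, b, c, d, e, la, lb, lc, ld, le, s1, s2, hD, hs1, hs2, ya, yb, yc, yd, ye⟩ := h
  let E : Fin 5 ≃ Fin 5 := Equiv.ofBijective ![a, b, c, d, e]
    ⟨hD.inj, Finite.injective_iff_surjective.1 hD.inj⟩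
  have E0 : E 0 = a := rfl
  have E1 : E 1 = b := rfl
  have E2 : E 2 = c := rfl
  have E3 : E 3 = d := rfl
  have E4 : E 4 = e := rfl
  let l : Fin 5 → ℝ := ![la, lb, lc, ld, le]
  have hcol : ∀ y : Fin n, ∃ z : Fin 5 → K, (∀ i, Val (z i) (A (E i) y + l i)) ∧
      ∑ i, pv i * z i = 0 ∧ ∑ i, qv s1 s2 i * z i = 0 := by
    intro y
    refine col pv (qv s1 s2) (PW s1 s2) (fun i => A (E i) y + l i) (PW_symm s1 s2)
      (val_pq s1 s2 hs1 hs2) ?_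
    have hy : (fun i => A i y) ∈ Set.range fun j i => A i j := ⟨y, rfl⟩
    have r0 := ya _ hy
    have r1 := yb _ hy
    have r2 := yc _ hy
    have r3 := yd _ hy
    have r4 := ye _ hy
    intro j
    fin_cases j
    · refine T4.ex (f := fun k => PW s1 s2 k 0 + (A (E k) y + l k)) (j := 0) (b := 1) (c := 2) (d := 3)
        (e := 4) (by unfold D5; decide) ?_
      convert r0 using 1 <;> simp [PW, l, E1, E2, E3, E4]
      ring
    · refine T4.ex (f := fun k => PW s1 s2 k 1 + (A (E k) y + l k)) (j := 1) (b := 0) (c := 2) (d := 3)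
        (e := 4) (by unfold D5; decide) ?_
      convert r1 using 1 <;> simp [PW, l, E0, E2, E3, E4]
      ring
    · refine T4.ex (f := fun k => PW s1 s2 k 2 + (A (E k) y + l k)) (j := 2) (b := 0) (c := 1) (d := 3)
        (e := 4) (by unfold D5; decide) ?_
      convert r2 using 1 <;> simp [PW, l, E0, E1, E3, E4]
    · refine T4.ex (f := fun k => PW s1 s2 k 3 + (A (E k) y + l k)) (j := 3) (b := 0) (c := 1) (d := 2)
        (e := 4) (by unfold D5; decide) ?_
      convert r3 using 1 <;> simp [PW, l, E0, E1, E2, E4]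
      ring
    · refine T4.ex (f := fun k => PW s1 s2 k 4 + (A (E k) y + l k)) (j := 4) (b := 0) (c := 1) (d := 2)
        (e := 3) (by unfold D5; decide) ?_
      convert r4 using 1 <;> simp [PW, l, E0, E1, E2, E3]
      ring
  choose z hz hp hq using hcol
  let B : Matrix (Fin 5) (Fin n) K := Matrix.of fun i y =>
    HahnSeries.single (-(l (E.symm i))) 1 * z y (E.symm i)
  let G : Matrix (Fin 2) (Fin 5) K := Matrix.of fun r i =>
    (![pv, qv s1 s2] r (E.symm i)) * HahnSeries.single (l (E.symm i)) 1
  refine ⟨B, fun i y => ?_, ?_⟩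
  · have h1 := (Val.single (-(l (E.symm i))) (one_ne_zero (α := ℂ))).mul (hz y (E.symm i))
    refine ⟨h1.ne, h1.order.trans ?_⟩
    simp
  · have hone : ∀ t : ℝ, (HahnSeries.single t (1 : ℂ)) * HahnSeries.single (-t) (1 : ℂ) = 1 := by
      intro t
      rw [HahnSeries.single_mul_single]; simp
    have hGB : G * B = 0 := by
      refine Matrix.ext fun r y => ?_
      rw [Matrix.mul_apply, Matrix.zero_apply]
      have : ∀ i, G r i * B i y = (fun k => ![pv, qv s1 s2] r k * z y k) (E.symm i) := by
        intro i
        simp only [G, B, Matrix.of_apply]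
        linear_combination (![pv, qv s1 s2] r (E.symm i) * z y (E.symm i)) * hone (l (E.symm i))
      rw [Finset.sum_congr rfl fun i _ => this i]
      refine (Equiv.sum_comp E.symm (fun k => ![pv, qv s1 s2] r k * z y k)).trans ?_
      fin_cases r
      · exact hp y
      · exact hq y
    have hG : 2 ≤ G.rank := by
      have h1 := Matrix.rank_submatrix_le G id ![E 0, E 2]
      rw [Matrix.rank_of_det_ne_zero] at h1
      · simpa using h1
      · rw [Matrix.det_fin_two]
        simp [G, pv, qv]
    have := Matrix.rank_add_rank_le_card_of_mul_eq_zero hGB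
    simp at this
    omega

/-- For `n ≥ 4`, every `5 × n` real matrix all of whose `4 × 4` submatrices are tropically
singular (tropical rank at most `3`) admits a lift over `K` of rank at most `3`
(Kapranov rank at most `3`). -/
theorem minors_tropical_basis_5xn (n : ℕ) (hn : 4 ≤ n) (A : Matrix (Fin 5) (Fin n) ℝ)
    (hsing : ∀ (r : Fin 4 → Fin 5) (c : Fin 4 → Fin n),
      Function.Injective r → Function.Injective c → TropSingular (A.submatrix r c)) :
    ∃ B : Matrix (Fin 5) (Fin n) K, IsLift A B ∧ B.rank ≤ 3 := by
  have : NeZero n := ⟨by omega⟩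
  have hu : ∀ a : Fin 5, ∃ u : Fin 4 → ℝ, ∀ x i, ∃ j, j ≠ i ∧
      u j + A (a.succAbove j) x ≤ u i + A (a.succAbove i) x := fun a =>
    stepH (fun i x => A (a.succAbove i) x) fun c hc =>
      hsing a.succAbove c Fin.succAbove_right_injective hc
  choose u hu using hu
  refine lift_of_Line A (mainComb (z := fun a => Fin.insertNth a 0 (u a)) ?_)
  rintro a b c d e hD _ ⟨y, rfl⟩
  refine T4.of_ex (f := fun k => A k y + (Fin.insertNth a 0 (u a) : Fin 5 → ℝ) k) hD ?_
  intro i hi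
  obtain ⟨i', rfl⟩ := Fin.exists_succAbove_eq hi
  obtain ⟨j', hj, hle⟩ := hu a y i'
  refine ⟨a.succAbove j', fun h => hj (Fin.succAbove_right_injective h), Fin.succAbove_ne _ _, ?_⟩
  simp only [Fin.insertNth_apply_succAbove]
  linarith
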